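/- For every k ≥ 1 and all multi-indices i, j ∈ Ω^k, the operators R_{N^n}P_{N^n}S_iS_j^*P_{N^n}R_{N^n} converge strongly (i.e. pointwise on ℓ²(ℤ⁺)) as n → ∞ to the operator S_{î}S_{ĵ}^*, where î := (N−1−i_1,…,N−1−i_k) denotes the dual multi-index of i = (i_1,…,i_k). -/

import Mathlib

open Filter in
lemma aux_tendsto {H : Type*} [NormedAddCommGroup H] [InnerProductSpace ℂ H] [CompleteSpace H]
    (e : HilbertBasis ℕ ℂ H) (T : ℕ → H →L[ℂ] H) (L : H →L[ℂ] H) (C : ℝ)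
    (hC : ∀ n, ‖T n‖ ≤ C) (h : ∀ m, ∀ᶠ n in atTop, T n (e m) = L (e m)) (x : H) :
    Tendsto (fun n => T n x) atTop (nhds (L x)) := by
  have hs : ∀ y ∈ Submodule.span ℂ (Set.range e), ∀ᶠ n in atTop, T n y = L y := by
    intro y hy
    induction hy using Submodule.span_induction with
    | mem y hy => obtain ⟨m, rfl⟩ := hy; exact h m
    | zero => simp
    | add a b _ _ ha hb => filter_upwards [ha, hb] with n h1 h2; simp [h1, h2]
    | smul c a _ ha => filter_upwards [ha] with n h1; simp [h1]
  have hC0 : 0 ≤ C := (norm_nonneg _).trans (hC 0)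
  have hD : 0 < C + ‖L‖ + 1 := by positivity
  rw [Metric.tendsto_atTop']
  intro ε hε
  have hd : Dense ((Submodule.span ℂ (Set.range e) : Submodule ℂ H) : Set H) := by
    exact Submodule.dense_iff_topologicalClosure_eq_top.mpr e.dense_span
  obtain ⟨y, hy, hxy⟩ := Metric.dense_iff.mp hd x (ε / (C + ‖L‖ + 1)) (by positivity)
  obtain ⟨n₀, hn₀⟩ := eventually_atTop.mp (hs y hxy)
  refine ⟨n₀, fun n hn => ?_⟩
  have h1 := hn₀ n hn.le
  rw [dist_eq_norm]
  have : T n x - L x = (T n - L) (x - y) := by simp [h1]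
  rw [this]
  have h2 : ‖x - y‖ < ε / (C + ‖L‖ + 1) := by
    rw [← dist_eq_norm, dist_comm]; exact hy
  have h3 : ‖T n - L‖ ≤ C + ‖L‖ + 1 := by
    have := norm_sub_le (T n) L
    linarith [hC n]
  calc _ ≤ ‖T n - L‖ * ‖x - y‖ := ContinuousLinearMap.le_opNorm _ _
    _ ≤ (C + ‖L‖ + 1) * ‖x - y‖ := by gcongr
    _ < ε := by rwa [lt_div_iff₀' hD] at h2

lemma aux_star {H : Type*} [NormedAddCommGroup H] [InnerProductSpace ℂ H] [CompleteSpace H]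
    (e : HilbertBasis ℕ ℂ H) (W : H →L[ℂ] H) (m : ℕ) (y : H)
    (h : ∀ r, inner ℂ (W (e r)) (e m) = inner ℂ (e r) y) : star W (e m) = y := by
  apply e.repr.injective
  ext r
  rw [HilbertBasis.repr_apply_apply, HilbertBasis.repr_apply_apply, ← h,
    ContinuousLinearMap.star_eq_adjoint, ContinuousLinearMap.adjoint_inner_right]

lemma aux_inner {H : Type*} [NormedAddCommGroup H] [InnerProductSpace ℂ H] [CompleteSpace H]
    (e : HilbertBasis ℕ ℂ H) (a b : ℕ) : inner ℂ (e a) (e b) = if a = b then (1:ℂ) else 0 :=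
  orthonormal_iff_ite.mp e.orthonormal a b

lemma aux_ext {H : Type*} [NormedAddCommGroup H] [InnerProductSpace ℂ H] [CompleteSpace H]
    (e : HilbertBasis ℕ ℂ H) (A B : H →L[ℂ] H) (h : ∀ m, A (e m) = B (e m)) : A = B := by
  ext x
  exact tendsto_nhds_unique (aux_tendsto e (fun _ => A) A ‖A‖ (fun _ => le_rfl) (by simp) x)
    (aux_tendsto e (fun _ => A) B ‖A‖ (fun _ => le_rfl) (by simp [h]) x)

lemma aux_norm {H : Type*} [NormedAddCommGroup H] [InnerProductSpace ℂ H] [CompleteSpace H]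
    (e : HilbertBasis ℕ ℂ H) (n : ℕ) (P R : H →L[ℂ] H)
    (hP : ∀ k : ℕ, P (e k) = if k < n then e k else 0)
    (hR : ∀ k : ℕ, R (e k) = if k < n then e (n - 1 - k) else 0) : ‖P‖ ≤ 1 ∧ ‖R‖ ≤ 1 := by
  have key : ∀ Q : H →L[ℂ] H, star Q * Q = P → ‖Q‖ * ‖Q‖ = ‖P‖ := by
    intro Q h; rw [← h, CStarRing.norm_star_mul_self]
  have hPs : star P = P := by
    refine aux_ext e _ _ fun m => aux_star e _ _ _ fun r => ?_
    rw [hP, hP]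
    split_ifs <;> simp [aux_inner] <;> omega
  have hRs : star R = R := by
    refine aux_ext e _ _ fun m => aux_star e _ _ _ fun r => ?_
    rw [hR, hR]
    split_ifs <;> simp [aux_inner]
    · congr 1; apply propext; omega
    all_goals omega
  have h1 := key P (by
    rw [hPs]; refine aux_ext e _ _ fun m => ?_
    rw [ContinuousLinearMap.mul_apply, hP]; split_ifs <;> simp [hP, *])
  have h2 := key R (by
    rw [hRs]; refine aux_ext e _ _ fun m => ?_
    rw [ContinuousLinearMap.mul_apply, hR, hP]
    split_ifs
    · rw [hR, if_pos (by omega)]; congr 1; omega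
    · simp)
  have hp : ‖P‖ ≤ 1 := by nlinarith [norm_nonneg P]
  exact ⟨hp, by nlinarith [norm_nonneg R]⟩

lemma aux_starW {H : Type*} [NormedAddCommGroup H] [InnerProductSpace ℂ H] [CompleteSpace H]
    (e : HilbertBasis ℕ ℂ H) (W : H →L[ℂ] H) (q v : ℕ) (hv : v < q)
    (hW : ∀ r, W (e r) = e (r * q + v)) (r w : ℕ) (hw : w < q) :
    star W (e (r * q + w)) = if w = v then e r else 0 := by
  apply aux_star
  intro s
  have : s * q + v = r * q + w ↔ w = v ∧ s = r := by
    constructor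
    · intro h
      have h1 := congrArg (· % q) h
      have hq : 0 < q := by omega
      simp [Nat.add_mod, Nat.mod_eq_of_lt hv, Nat.mod_eq_of_lt hw] at h1
      subst h1
      exact ⟨rfl, Nat.eq_of_mul_eq_mul_right hq (by omega)⟩
    · rintro ⟨rfl, rfl⟩; rfl
  rw [hW, aux_inner]
  have hq0 : q ≠ 0 := by omega
  by_cases h1 : w = v <;> simp [this, h1, hq0, aux_inner]

lemma aux_prod {H : Type*} [NormedAddCommGroup H] [InnerProductSpace ℂ H] [CompleteSpace H]
    (e : HilbertBasis ℕ ℂ H) (N : ℕ) (S : Fin N → H →L[ℂ] H)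
    (hS : ∀ (i : Fin N) (r : ℕ), S i (e r) = e (r * N + (i : ℕ))) (k : ℕ) (i : Fin k → Fin N) :
    ∃ v < N ^ k, (∀ r, (List.ofFn fun t => S (i t)).prod (e r) = e (r * N ^ k + v)) ∧
      ∀ r, (List.ofFn fun t => S (Fin.rev (i t))).prod (e r) = e (r * N ^ k + (N ^ k - 1 - v)) := by
  induction k with
  | zero => exact ⟨0, by simp, by simp, by simp⟩
  | succ k ih =>
    obtain ⟨v, hv, h1, h2⟩ := ih (fun t => i t.succ)
    have hi := (i 0).isLt
    have hlt : v * N + (i 0 : ℕ) < N ^ (k + 1) := by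
      rw [pow_succ]; nlinarith
    refine ⟨v * N + i 0, hlt, fun r => ?_, fun r => ?_⟩
    · rw [List.ofFn_succ, List.prod_cons, ContinuousLinearMap.mul_apply, h1, hS]
      congr 1; ring
    · rw [List.ofFn_succ, List.prod_cons, ContinuousLinearMap.mul_apply, h2, hS, Fin.val_rev]
      congr 1
      obtain ⟨a, ha⟩ := Nat.exists_eq_add_of_lt hv
      obtain ⟨b, hb⟩ := Nat.exists_eq_add_of_lt hi
      have e1 : N ^ k - 1 - v = a := by omega
      have e2 : N - ((i 0 : ℕ) + 1) = b := by omega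
      have e3 : N ^ (k + 1) - 1 - (v * N + i 0) = a * N + b := by
        have : N ^ (k + 1) = v * N + a * N + N := by rw [pow_succ, ha]; ring
        omega
      rw [e1, e2, e3]; ring


/-- With `H`, basis `e`, projections `P n`, Cuntz isometries `S i`, and
reflections `R n` (`R n (e k) = e (n-1-k)` for `k < n`, `0` otherwise): for every `k ≥ 1` and
multi-indices `i, j ∈ Ω^k`, the operators `R_{N^n} P_{N^n} S_i S_j* P_{N^n} R_{N^n}` converge
strongly, as `n → ∞`, to `S_î S_ĵ*`, where `î` is the dual multi-index
`(N-1-i₁, …, N-1-i_k)` (realized componentwise by `Fin.rev`). -/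
theorem stmt14 {H : Type*} [NormedAddCommGroup H] [InnerProductSpace ℂ H] [CompleteSpace H]
    (e : HilbertBasis ℕ ℂ H) (N : ℕ) (hN : 2 ≤ N)
    (S : Fin N → H →L[ℂ] H)
    (hS : ∀ (i : Fin N) (r : ℕ), S i (e r) = e (r * N + (i : ℕ)))
    (P : ℕ → H →L[ℂ] H)
    (hP : ∀ n k : ℕ, P n (e k) = if k < n then e k else 0)
    (R : ℕ → H →L[ℂ] H)
    (hR : ∀ n k : ℕ, R n (e k) = if k < n then e (n - 1 - k) else 0)
    (k : ℕ) (hk : 1 ≤ k) (i j : Fin k → Fin N) (x : H) :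
    Filter.Tendsto
      (fun n : ℕ =>
        (R (N ^ n) * P (N ^ n) * (List.ofFn fun t => S (i t)).prod *
          star ((List.ofFn fun t => S (j t)).prod) * P (N ^ n) * R (N ^ n)) x)
      Filter.atTop
      (nhds (((List.ofFn fun t => S (Fin.rev (i t))).prod *
          star ((List.ofFn fun t => S (Fin.rev (j t))).prod)) x)) := by
  obtain ⟨v, hv, hi1, hi2⟩ := aux_prod e N S hS k i
  obtain ⟨u, hu, hj1, hj2⟩ := aux_prod e N S hS k j
  generalize (List.ofFn fun t => S (i t)).prod = A at *
  generalize (List.ofFn fun t => S (j t)).prod = B at *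
  generalize (List.ofFn fun t => S (Fin.rev (i t))).prod = A' at *
  generalize (List.ofFn fun t => S (Fin.rev (j t))).prod = B' at *
  refine aux_tendsto e (fun n => R (N ^ n) * P (N ^ n) * A * star B * P (N ^ n) * R (N ^ n))
    (A' * star B') (‖A‖ * ‖star B‖) (fun n => ?_) (fun m => ?_) x
  · obtain ⟨h1, h2⟩ := aux_norm e (N ^ n) _ _ (hP _) (hR _)
    calc _ ≤ ‖R (N ^ n)‖ * ‖P (N ^ n)‖ * ‖A‖ * ‖star B‖ * ‖P (N ^ n)‖ * ‖R (N ^ n)‖ := by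
          refine (norm_mul_le _ _).trans ?_
          gcongr
          refine (norm_mul_le _ _).trans ?_
          gcongr
          refine (norm_mul_le _ _).trans ?_
          gcongr
          refine (norm_mul_le _ _).trans ?_
          gcongr
          exact norm_mul_le _ _
      _ ≤ 1 * 1 * ‖A‖ * ‖star B‖ * 1 * 1 := by gcongr
      _ = _ := by ring
  · filter_upwards [Filter.eventually_ge_atTop (k + m)] with n hn
    have hq : 0 < N ^ k := by omega
    obtain ⟨M, hM, hmM⟩ : ∃ M, N ^ n = M * N ^ k ∧ m < M := by
      refine ⟨N ^ (n - k), ?_, ?_⟩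
      · rw [← pow_add]; congr 1; omega
      · calc m ≤ n - k := by omega
          _ < N ^ (n - k) := Nat.lt_pow_self (by omega)
    rw [hM]
    generalize N ^ k = q at *
    obtain ⟨r, w, hw, rfl⟩ : ∃ r w, w < q ∧ m = r * q + w :=
      ⟨m / q, m % q, Nat.mod_lt _ hq, by rw [mul_comm, Nat.div_add_mod]⟩
    have hrM : r < M := by nlinarith
    obtain ⟨d, rfl⟩ := Nat.exists_eq_add_of_lt hrM
    have hexp : (r + d + 1) * q = r * q + d * q + q := by ring
    have hR1 : R ((r + d + 1) * q) (e (r * q + w)) = e (d * q + (q - 1 - w)) := by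
      rw [hR, if_pos (by omega)]; congr 1; omega
    simp only [ContinuousLinearMap.mul_apply]
    rw [hR1, hP, if_pos (by omega), aux_starW e B q u hu hj1 _ _ (by omega),
      aux_starW e B' q _ (by omega) hj2 _ _ hw]
    by_cases h : w = q - 1 - u
    · rw [if_pos (by omega), if_pos h, hi1, hi2, hP, if_pos (by omega), hR, if_pos (by omega)]
      congr 1; omega
    · rw [if_neg (by omega), if_neg h]; simp
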